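/- Let m₁,…,m_k ≥ 1 with n = m₁+…+m_k, set M₀ = 0 and M_s = m₁+…+m_s. Let U ⊆ ℝⁿ be open and let λ₁,…,λ_k : U → ℝ be smooth with λ_r(x) ≠ λ_s(x) for all r ≠ s and all x ∈ U. Let K(x) be the n×n block-diagonal matrix with blocks J_{m₁}(λ₁(x)),…,J_{m_k}(λ_k(x)), and let σ₁,…,σₙ : U → ℝ be determined by det(t·I − K(x)) = tⁿ − σ₁(x)·t^{n−1} − … − σₙ(x). Then for every point x ∈ U the following are equivalent: (a) Σ_{m=1}^n Σ_{s=1}^n (∂σ_m/∂x^s)(x) · [K(x)^{n−m}]_{s,i} = 0 for every i ∈ {1,…,n} (with K⁰ = I); (b) (∂λ_s/∂x^{M_{s−1}+1})(x) = 0 for every s ∈ {1,…,k}. -/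

import Mathlib

open scoped BigOperators

/-- Partial derivative of `f : ℝⁿ → ℝ` in the `s`-th coordinate direction. -/
noncomputable def pd {n : ℕ} (f : (Fin n → ℝ) → ℝ) (s : Fin n) (x : Fin n → ℝ) : ℝ :=
  fderiv ℝ f x (Pi.single s 1)

/-- Partial sums of block sizes: `Msum m s = m 0 + … + m (s-1)`, so `Msum m 0 = 0`. -/
def Msum (m : ℕ → ℕ) (s : ℕ) : ℕ :=
  ∑ r ∈ Finset.range s, m r

/-- The (0-indexed) block to which the (0-indexed) position `i` belongs, for block sizes
`m 0, …, m (k-1)`. -/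
def blk (k : ℕ) (m : ℕ → ℕ) (i : ℕ) : ℕ :=
  ((Finset.range k).filter (fun s => Msum m (s + 1) ≤ i)).card

/-- The `n × n` block-diagonal matrix with Jordan blocks `J_{m 0}(lam 0), …, J_{m (k-1)}(lam (k-1))`
(evaluated at the point `x`). -/
noncomputable def KblockDiag {n : ℕ} (k : ℕ) (m : ℕ → ℕ) (lam : ℕ → (Fin n → ℝ) → ℝ)
    (x : Fin n → ℝ) : Matrix (Fin n) (Fin n) ℝ :=
  fun i j =>
    if (j : ℕ) = (i : ℕ) then lam (blk k m i) x
    else if (j : ℕ) = (i : ℕ) + 1 ∧ blk k m j = blk k m i then 1 else 0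

/-- The coefficient functions `σₘ` of the characteristic polynomial of a matrix-valued map,
in the convention `det(t·I − K(x)) = tⁿ − σ₁(x) t^{n−1} − … − σₙ(x)`. -/
noncomputable def sigmaCoeff {n : ℕ} (K : (Fin n → ℝ) → Matrix (Fin n) (Fin n) ℝ)
    (m : ℕ) (x : Fin n → ℝ) : ℝ :=
  -(Matrix.charpoly (K x)).coeff (n - m)

/-- The row vector `Vᵢ(x) = Σ_{m=1}^n Σ_{s=1}^n (∂σₘ/∂x^s)(x) · [K(x)^{n−m}]_{s,i}`. -/
noncomputable def Vvec {n : ℕ} (K : (Fin n → ℝ) → Matrix (Fin n) (Fin n) ℝ)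
    (i : Fin n) (x : Fin n → ℝ) : ℝ :=
  ∑ m ∈ Finset.Icc 1 n, ∑ s : Fin n, pd (sigmaCoeff K m) s x * ((K x) ^ (n - m)) s i

/-!
Let `p = ∏ r, (X - λ_r) ^ m_r` be the characteristic polynomial of `K`, and let `p_r` be `p` with
one factor `X - λ_r` removed. Differentiating the coefficients of `p` gives
`∂_s p = -∑ r, m_r ∂_s λ_r p_r`, and substituting `K` into this polynomial gives
`V_i = ∑ s, ∑ r, m_r ∂_s λ_r (p_r(K))_{s,i}`.

The entries of `f(J_m(λ))` are the Taylor coefficients of `f` at `λ`. Since `p_r` vanishes to order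
`m_q` at `λ_q` for `q ≠ r`, but only to order `m_r - 1` at `λ_r`, the matrix `p_r(K)` has a single
nonzero entry `c_r = ∏ q ≠ r, (λ_r - λ_q) ^ m_q ≠ 0`, in the first row and last column of block `r`.
So `V` vanishes at every position that does not end a block, and equals `m_r c_r ∂λ_r`, with the
derivative taken in the first coordinate of block `r`, at the end of block `r`.
-/

open Polynomial

section JordanBlock

variable {R : Type*} [CommRing R]

/-- The Jordan block `J_m(a)`. -/
def jordanBlock (m : ℕ) (a : R) : Matrix (Fin m) (Fin m) R :=
  fun i j => if (j : ℕ) = i then a else if (j : ℕ) = i + 1 then 1 else 0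

lemma jordanBlock_eq_algebraMap_add (m : ℕ) (a : R) :
    jordanBlock m a = algebraMap R _ a + jordanBlock m 0 := by
  ext i j
  by_cases hij : (j : ℕ) = i
  · simp [jordanBlock, Matrix.algebraMap_matrix_apply, Fin.ext hij]
  · simp [jordanBlock, Matrix.algebraMap_matrix_apply, Fin.ext_iff, hij, Ne.symm hij]

lemma jordanBlock_zero_pow_apply (m d : ℕ) (i j : Fin m) :
    (jordanBlock m (0 : R) ^ d) i j = if (j : ℕ) = i + d then 1 else 0 := by
  induction d generalizing j with
  | zero => simp [Matrix.one_apply, Fin.ext_iff, eq_comm]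
  | succ d ih =>
    simp only [pow_succ, Matrix.mul_apply, ih, ite_mul, one_mul, zero_mul]
    by_cases hd : (i : ℕ) + d < m
    · rw [Finset.sum_eq_single ⟨i + d, hd⟩ (fun l _ hl => if_neg fun h => hl (Fin.ext h))
        (by simp), if_pos rfl]
      simp only [jordanBlock]
      grind
    · rw [Finset.sum_eq_zero fun l _ => if_neg (by omega), if_neg (by omega)]

lemma aeval_jordanBlock_apply (m : ℕ) (a : R) (p : R[X]) (i j : Fin m) :
    aeval (jordanBlock m a) p i j =
      if (i : ℕ) ≤ j then (taylor a p).coeff (j - i) else 0 := by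
  have h_taylor : aeval (jordanBlock m a) p = aeval (jordanBlock m 0) (taylor a p) := by
    rw [taylor_apply, aeval_comp, map_add, aeval_X, aeval_C, add_comm,
      ← jordanBlock_eq_algebraMap_add]
  simp only [h_taylor, aeval_eq_sum_range, Matrix.sum_apply, Matrix.smul_apply,
    jordanBlock_zero_pow_apply, smul_eq_mul, mul_ite, mul_one, mul_zero]
  split_ifs with hij
  · simp only [← Nat.sub_eq_iff_eq_add' hij, Finset.sum_ite_eq, Finset.mem_range]
    split_ifs with hd
    · rfl
    · exact (coeff_eq_zero_of_natDegree_lt (by omega)).symm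
  · exact Finset.sum_eq_zero fun d _ => if_neg (by omega)

lemma aeval_jordanBlock_X_sub_C_pow_mul_apply (m d : ℕ) (a : R) (p : R[X]) (i j : Fin m) :
    aeval (jordanBlock m a) ((X - C a) ^ d * p) i j =
      if (i : ℕ) + d ≤ j then (taylor a p).coeff (j - i - d) else 0 := by
  have h_taylor : taylor a ((X - C a) ^ d * p) = X ^ d * taylor a p := by
    simp [taylor_mul, taylor_pow]
  rw [aeval_jordanBlock_apply, h_taylor, coeff_X_pow_mul', ← ite_and]
  exact if_congr (by omega) rfl rfl

lemma aeval_jordanBlock_X_sub_C_pow_mul_eq_zero (m : ℕ) (a : R) (p : R[X]) :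
    aeval (jordanBlock m a) ((X - C a) ^ m * p) = 0 := by
  ext i j
  rw [aeval_jordanBlock_X_sub_C_pow_mul_apply, if_neg (by omega), Matrix.zero_apply]

lemma aeval_jordanBlock_X_sub_C_pow_pred_mul (m : ℕ) [NeZero m] (a : R) (p : R[X]) :
    aeval (jordanBlock m a) ((X - C a) ^ (m - 1) * p) = Matrix.single 0 ⊤ (p.eval a) := by
  ext i j
  have h_corner : (i : ℕ) + (m - 1) ≤ j ↔ 0 = i ∧ ⊤ = j := by
    simp only [Fin.ext_iff, Fin.val_zero, Fin.val_top]
    omega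
  rw [aeval_jordanBlock_X_sub_C_pow_mul_apply, Matrix.single_apply, if_congr h_corner rfl rfl]
  split_ifs with h
  · rw [← h.1, ← h.2, Fin.val_zero, Fin.val_top, Nat.sub_zero, Nat.sub_self, taylor_coeff_zero]
  · rfl

end JordanBlock

section BlockDiagonal

variable {ι : Type*} [DecidableEq ι]

lemma blockDiagonal'_piSingle_single {α : Type*} [Zero α] {n : ι → Type*}
    [∀ q, DecidableEq (n q)] (r : ι) (i j : n r) (c : α) :
    Matrix.blockDiagonal' (Pi.single r (Matrix.single i j c)) =
      Matrix.single (⟨r, i⟩ : Σ q, n q) ⟨r, j⟩ c := by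
  ext ⟨q, i'⟩ ⟨q', j'⟩
  rcases eq_or_ne r q with rfl | hr
  · rcases eq_or_ne r q' with rfl | hr'
    · simp [Matrix.blockDiagonal'_apply_eq, Matrix.single_apply]
    · simp [Matrix.blockDiagonal'_apply_ne _ _ _ hr', hr']
  · rw [Matrix.blockDiagonal'_apply]
    simp [hr]

variable [Fintype ι]

lemma aeval_blockDiagonal' {R A : Type*} [CommSemiring R] [Semiring A] [Algebra R A]
    {n : ι → Type*} [∀ q, Fintype (n q)] [∀ q, DecidableEq (n q)]
    (M : ∀ q, Matrix (n q) (n q) A) (p : R[X]) :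
    aeval (Matrix.blockDiagonal' M) p = Matrix.blockDiagonal' fun q => aeval (M q) p := by
  induction p using Polynomial.induction_on' with
  | add p q hp hq =>
    simp only [map_add, hp, hq, ← Matrix.blockDiagonal'_add]
    rfl
  | monomial d c =>
    simp only [aeval_monomial, ← Algebra.smul_def, ← Matrix.blockDiagonal'_pow,
      ← Matrix.blockDiagonal'_smul]
    rfl

variable {R : Type*} [CommRing R]

/-- The polynomial `∏ q, (X - a q) ^ m q` with one factor `X - a r` removed. It is, up to the
factor `-m r`, the derivative of that product in `a r`. If `m r = 0`, truncated subtraction makes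
it the whole product. -/
noncomputable def rootCofactor (m : ι → ℕ) (a : ι → R) (r : ι) : R[X] :=
  (X - C (a r)) ^ (m r - 1) * ∏ q ∈ Finset.univ.erase r, (X - C (a q)) ^ m q

lemma aeval_rootCofactor_blockDiagonal'_jordanBlock (m : ι → ℕ) [∀ q, NeZero (m q)] (a : ι → R)
    (r : ι) :
    aeval (Matrix.blockDiagonal' fun q => jordanBlock (m q) (a q)) (rootCofactor m a r) =
      Matrix.single ⟨r, 0⟩ ⟨r, ⊤⟩ (∏ q ∈ Finset.univ.erase r, (a r - a q) ^ m q) := by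
  rw [aeval_blockDiagonal', ← blockDiagonal'_piSingle_single]
  congr 1
  ext1 q
  rcases eq_or_ne q r with rfl | hq
  · rw [Pi.single_eq_same, rootCofactor, aeval_jordanBlock_X_sub_C_pow_pred_mul]
    simp only [eval_prod, eval_pow, eval_sub, eval_X, eval_C]
  · have hq_mem : q ∈ Finset.univ.erase r := by simp [hq]
    rw [Pi.single_eq_of_ne hq, rootCofactor, ← Finset.mul_prod_erase _ _ hq_mem, mul_left_comm,
      aeval_jordanBlock_X_sub_C_pow_mul_eq_zero]

end BlockDiagonal

section CoeffDerivative

variable {𝕜 E : Type*} [NontriviallyNormedField 𝕜] [NormedAddCommGroup E] [NormedSpace 𝕜 E]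

/-- The coefficients of the family of polynomials `p` are differentiable at `x`, and their
derivatives in the direction `v` are the coefficients of `p'`. The derivative is taken
coefficientwise because `𝕜[X]` carries no norm. -/
def HasCoeffDerivAt (p : E → 𝕜[X]) (p' : 𝕜[X]) (x v : E) : Prop :=
  ∀ d, DifferentiableAt 𝕜 (fun y => (p y).coeff d) x ∧
    fderiv 𝕜 (fun y => (p y).coeff d) x v = p'.coeff d

namespace HasCoeffDerivAt

variable {p q : E → 𝕜[X]} {p' q' : 𝕜[X]} {x v : E}

lemma const (P : 𝕜[X]) (x v : E) : HasCoeffDerivAt (fun _ => P) 0 x v := fun d => by simp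

lemma mul (hp : HasCoeffDerivAt p p' x v) (hq : HasCoeffDerivAt q q' x v) :
    HasCoeffDerivAt (fun y => p y * q y) (p' * q x + p x * q') x v := by
  intro d
  simp only [coeff_mul, coeff_add]
  refine ⟨.fun_sum fun u _ => (hp u.1).1.mul (hq u.2).1, ?_⟩
  rw [fderiv_fun_sum fun u _ => (hp u.1).1.mul (hq u.2).1, sum_apply,
    ← Finset.sum_add_distrib]
  refine Finset.sum_congr rfl fun u _ => ?_
  rw [fderiv_fun_mul (hp u.1).1 (hq u.2).1]
  simp only [add_apply, smul_apply, smul_eq_mul,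
    (hp u.1).2, (hq u.2).2]
  ring

lemma finset_prod {ι : Type*} [DecidableEq ι] {p : ι → E → 𝕜[X]} {p' : ι → 𝕜[X]}
    (S : Finset ι) (hp : ∀ r ∈ S, HasCoeffDerivAt (p r) (p' r) x v) :
    HasCoeffDerivAt (fun y => ∏ r ∈ S, p r y) (∑ r ∈ S, p' r * ∏ q ∈ S.erase r, p q x) x v := by
  induction S using Finset.induction_on with
  | empty => simpa using const (1 : 𝕜[X]) x v
  | insert r S hr ih =>
    simp only [Finset.prod_insert hr]
    convert (hp r (S.mem_insert_self r)).mul (ih fun s hs => hp s (Finset.mem_insert_of_mem hs))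
      using 1
    rw [Finset.sum_insert hr, Finset.erase_insert hr, Finset.mul_sum]
    congr 1
    refine Finset.sum_congr rfl fun s hs => ?_
    have hrs : r ≠ s := fun h => hr (h ▸ hs)
    rw [Finset.erase_insert_of_ne hrs, Finset.prod_insert (by simp [hr]), mul_left_comm]

lemma pow (hp : HasCoeffDerivAt p p' x v) (m : ℕ) :
    HasCoeffDerivAt (fun y => p y ^ m) (m * (p' * p x ^ (m - 1))) x v := by
  simpa using finset_prod (Finset.univ : Finset (Fin m)) fun _ _ => hp

lemma X_sub_C {f : E → 𝕜} (hf : DifferentiableAt 𝕜 f x) (v : E) :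
    HasCoeffDerivAt (fun y => X - C (f y)) (-C (fderiv 𝕜 f x v)) x v := by
  intro d
  simp only [coeff_sub, coeff_neg, coeff_C]
  split_ifs
  · simp [hf, fderiv_const_sub]
  · simp

lemma prod_X_sub_C_pow {ι : Type*} [Fintype ι] [DecidableEq ι] (m : ι → ℕ) {a : ι → E → 𝕜}
    (ha : ∀ r, DifferentiableAt 𝕜 (a r) x) (v : E) :
    HasCoeffDerivAt (fun y => ∏ r, (X - C (a r y)) ^ m r)
      (-∑ r, (m r * fderiv 𝕜 (a r) x v) • rootCofactor m (fun q => a q x) r) x v := by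
  convert finset_prod Finset.univ fun r _ => (X_sub_C (ha r) v).pow (m r) using 1
  rw [← Finset.sum_neg_distrib]
  refine Finset.sum_congr rfl fun r _ => ?_
  rw [rootCofactor, smul_eq_C_mul, C_mul, map_natCast]
  ring

lemma natDegree_lt {n : ℕ} (hn : n ≠ 0) (hp : HasCoeffDerivAt p p' x v)
    (h_monic : ∀ y, (p y).Monic) (h_deg : ∀ y, (p y).natDegree = n) : p'.natDegree < n := by
  suffices h_coeff : ∀ d ≥ n, p'.coeff d = 0 by
    rcases eq_or_ne p' 0 with rfl | hp'
    · simpa using Nat.pos_of_ne_zero hn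
    · exact not_le.1 fun h => hp' (leadingCoeff_eq_zero.1 (h_coeff _ h))
  intro d hd
  have h_const : (fun y => (p y).coeff d) = fun _ => if d = n then 1 else 0 := by
    ext y
    split_ifs with hdn
    · rw [hdn, ← h_deg y]
      exact h_monic y
    · exact coeff_eq_zero_of_natDegree_lt (by rw [h_deg y]; omega)
  rw [← (hp d).2, h_const, fderiv_const_apply, zero_apply]

end HasCoeffDerivAt

end CoeffDerivative

lemma Vvec_eq_neg_sum_aeval {n : ℕ} {K : (Fin n → ℝ) → Matrix (Fin n) (Fin n) ℝ}
    {x : Fin n → ℝ} {P : Fin n → ℝ[X]}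
    (hP : ∀ s, HasCoeffDerivAt (fun y => (K y).charpoly) (P s) x (Pi.single s 1)) (i : Fin n) :
    Vvec K i x = -∑ s, aeval (K x) (P s) s i := by
  have h_pd (l : ℕ) (s : Fin n) : pd (sigmaCoeff K l) s x = -(P s).coeff (n - l) := by
    rw [← (hP s _).2, ← neg_apply, ← fderiv_fun_neg]
    rfl
  have h_deg (s : Fin n) : (P s).natDegree < n :=
    (hP s).natDegree_lt s.pos.ne' (fun y => (K y).charpoly_monic) fun y => by
      rw [Matrix.charpoly_natDegree_eq_dim, Fintype.card_fin]
  rw [Vvec, Finset.sum_comm, ← Finset.sum_neg_distrib]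
  refine Finset.sum_congr rfl fun s _ => ?_
  simp only [aeval_eq_sum_range' (h_deg s), Matrix.sum_apply, Matrix.smul_apply, smul_eq_mul,
    h_pd, ← Finset.sum_neg_distrib, ← neg_mul]
  refine Finset.sum_nbij' (n - ·) (n - ·) ?_ ?_ ?_ ?_ fun _ _ => rfl <;>
    simp only [Finset.mem_Icc, Finset.mem_range] <;> omega

section Blocks

lemma Msum_succ (m : ℕ → ℕ) (s : ℕ) : Msum m (s + 1) = Msum m s + m s :=
  Finset.sum_range_succ m s

lemma Msum_mono (m : ℕ → ℕ) : Monotone (Msum m) :=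
  monotone_nat_of_le_succ fun s => by rw [Msum_succ]; omega

lemma blk_Msum_add {k r a : ℕ} (m : ℕ → ℕ) (hr : r < k) (ha : a < m r) :
    blk k m (Msum m r + a) = r := by
  have h_filter :
      (Finset.range k).filter (fun s => Msum m (s + 1) ≤ Msum m r + a) = Finset.range r := by
    ext s
    simp only [Finset.mem_filter, Finset.mem_range]
    constructor
    · rintro ⟨-, h⟩
      by_contra! hrs
      have h_mono := Msum_mono m (show r + 1 ≤ s + 1 by omega)
      rw [Msum_succ m r] at h_mono
      omega
    · intro hs
      exact ⟨hs.trans hr, (Msum_mono m hs).trans (Nat.le_add_right _ _)⟩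
  rw [blk, h_filter, Finset.card_range]

variable {k : ℕ} {m : ℕ → ℕ} {n : ℕ} (hn : n = Msum m k)

/-- The position in the whole matrix of the `a`-th position of block `r`, as an equivalence. -/
def blockEquiv : (Σ r : Fin k, Fin (m r)) ≃ Fin n :=
  finSigmaFinEquiv.trans (finCongr (by rw [hn, Msum, Fin.sum_univ_eq_sum_range]))

lemma blockEquiv_val (r : Fin k) (a : Fin (m r)) :
    (blockEquiv hn ⟨r, a⟩ : ℕ) = Msum m r + a := by
  simp [blockEquiv, Msum, Fin.sum_univ_eq_sum_range]

lemma blk_blockEquiv (r : Fin k) (a : Fin (m r)) : blk k m (blockEquiv hn ⟨r, a⟩) = r := by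
  rw [blockEquiv_val, blk_Msum_add m r.2 a.2]

lemma KblockDiag_eq_reindex (lam : ℕ → (Fin n → ℝ) → ℝ) (x : Fin n → ℝ) :
    KblockDiag k m lam x = Matrix.reindexAlgEquiv ℝ ℝ (blockEquiv hn)
      (Matrix.blockDiagonal' fun r : Fin k => jordanBlock (m r) (lam r x)) := by
  ext i j
  obtain ⟨⟨r, a⟩, rfl⟩ := (blockEquiv hn).surjective i
  obtain ⟨⟨q, b⟩, rfl⟩ := (blockEquiv hn).surjective j
  simp only [Matrix.coe_reindexAlgEquiv, Matrix.reindex_apply, Matrix.submatrix_apply,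
    Equiv.symm_apply_apply, KblockDiag, blk_blockEquiv, Fin.val_inj, EmbeddingLike.apply_eq_iff_eq]
  rcases eq_or_ne r q with rfl | hrq
  · simp [Matrix.blockDiagonal'_apply_eq, jordanBlock, blockEquiv_val, Fin.ext_iff, add_assoc]
  · simp [Matrix.blockDiagonal'_apply_ne _ _ _ hrq, hrq.symm]

include hn in
lemma charpoly_KblockDiag (lam : ℕ → (Fin n → ℝ) → ℝ) (x : Fin n → ℝ) :
    (KblockDiag k m lam x).charpoly = ∏ r : Fin k, (X - C (lam r x)) ^ m r := by
  have h_upper : (KblockDiag k m lam x).IsUpperTriangular := fun i j (hji : j < i) => by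
    rw [KblockDiag, if_neg (by omega), if_neg (by omega)]
  rw [Matrix.charpoly_of_isUpperTriangular _ h_upper, ← (blockEquiv hn).prod_comp,
    Fintype.prod_sigma]
  simp [KblockDiag, blk_blockEquiv]

variable [∀ r : Fin k, NeZero (m r)]

/-- The position of the first row of block `r`. -/
def blockStart (r : Fin k) : Fin n := blockEquiv hn ⟨r, 0⟩

/-- The position of the last row of block `r`. -/
def blockEnd (r : Fin k) : Fin n := blockEquiv hn ⟨r, ⊤⟩

lemma blockStart_val (r : Fin k) : (blockStart hn r : ℕ) = Msum m r := by
  rw [blockStart, blockEquiv_val, Fin.val_zero, add_zero]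

lemma blockEnd_injective : Function.Injective (blockEnd hn (k := k) (m := m)) := fun _ _ h =>
  congrArg Sigma.fst ((blockEquiv hn).injective h)

lemma aeval_rootCofactor_KblockDiag (lam : ℕ → (Fin n → ℝ) → ℝ) (x : Fin n → ℝ) (r : Fin k) :
    aeval (KblockDiag k m lam x) (rootCofactor (fun q : Fin k => m q) (fun q => lam q x) r) =
      Matrix.single (blockStart hn r) (blockEnd hn r)
        (∏ q ∈ Finset.univ.erase r, (lam r x - lam q x) ^ m q) := by
  rw [KblockDiag_eq_reindex hn, aeval_algHom_apply,
    aeval_rootCofactor_blockDiagonal'_jordanBlock (fun q : Fin k => m q),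
    Matrix.coe_reindexAlgEquiv, Matrix.reindex_apply, Matrix.submatrix_single_equiv]
  rfl

lemma Vvec_KblockDiag {lam : ℕ → (Fin n → ℝ) → ℝ} {x : Fin n → ℝ}
    (hlam : ∀ r : Fin k, DifferentiableAt ℝ (lam r) x) (i : Fin n) :
    Vvec (KblockDiag k m lam) i x =
      ∑ r : Fin k, if blockEnd hn r = i then
        m r * pd (lam r) (blockStart hn r) x *
          ∏ q ∈ Finset.univ.erase r, (lam r x - lam q x) ^ m q
      else 0 := by
  have h_deriv (s : Fin n) := HasCoeffDerivAt.prod_X_sub_C_pow (fun r : Fin k => m r) hlam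
    (Pi.single s 1)
  simp only [← charpoly_KblockDiag hn] at h_deriv
  rw [Vvec_eq_neg_sum_aeval h_deriv]
  simp only [map_neg, map_sum, map_smul, aeval_rootCofactor_KblockDiag hn, Matrix.neg_apply,
    Matrix.sum_apply, Matrix.smul_apply, Matrix.single_apply, smul_eq_mul, mul_ite, mul_zero,
    Finset.sum_neg_distrib, neg_neg, ite_and]
  rw [Finset.sum_comm]
  simp [pd]

lemma Vvec_KblockDiag_blockEnd {lam : ℕ → (Fin n → ℝ) → ℝ} {x : Fin n → ℝ}
    (hlam : ∀ r : Fin k, DifferentiableAt ℝ (lam r) x) (r : Fin k) :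
    Vvec (KblockDiag k m lam) (blockEnd hn r) x =
      m r * pd (lam r) (blockStart hn r) x *
        ∏ q ∈ Finset.univ.erase r, (lam r x - lam q x) ^ m q := by
  simp [Vvec_KblockDiag hn hlam, (blockEnd_injective hn).eq_iff]

lemma Vvec_KblockDiag_vanishes_iff {lam : ℕ → (Fin n → ℝ) → ℝ} {x : Fin n → ℝ}
    (hlam : ∀ r : Fin k, DifferentiableAt ℝ (lam r) x)
    (hdist : Function.Injective fun r : Fin k => lam r x) :
    (∀ i, Vvec (KblockDiag k m lam) i x = 0) ↔
      ∀ r : Fin k, pd (lam r) (blockStart hn r) x = 0 := by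
  constructor
  · intro hV r
    have h_mult : (m r : ℝ) ≠ 0 := Nat.cast_ne_zero.2 (NeZero.ne (m r))
    have h_gap : ∏ q ∈ Finset.univ.erase r, (lam r x - lam q x) ^ m q ≠ 0 :=
      Finset.prod_ne_zero_iff.2 fun q hq =>
        pow_ne_zero _ (sub_ne_zero.2 (hdist.ne (Finset.ne_of_mem_erase hq).symm))
    have hVr := hV (blockEnd hn r)
    rw [Vvec_KblockDiag_blockEnd hn hlam] at hVr
    simpa only [mul_eq_zero, h_mult, h_gap, false_or, or_false] using hVr
  · intro hpd i
    simp only [Vvec_KblockDiag hn hlam, hpd, mul_zero, zero_mul, ite_self, Finset.sum_const_zero]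

end Blocks

theorem Vvec_vanishes_iff_weaklyNonlinear_blockDiag_general (k : ℕ) (m : ℕ → ℕ)
    (hm : ∀ s < k, 1 ≤ m s) {n : ℕ} (hn : n = Msum m k)
    (lam : ℕ → (Fin n → ℝ) → ℝ) (x : Fin n → ℝ)
    (hlam : ∀ s < k, DifferentiableAt ℝ (lam s) x)
    (hdist : ∀ r < k, ∀ s < k, r ≠ s → lam r x ≠ lam s x) :
    (∀ i : Fin n, Vvec (KblockDiag k m lam) i x = 0) ↔
      (∀ s < k, ∀ j0 : Fin n, (j0 : ℕ) = Msum m s → pd (lam s) j0 x = 0) := by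
  have (r : Fin k) : NeZero (m r) := ⟨Nat.one_le_iff_ne_zero.1 (hm r r.2)⟩
  have h_inj : Function.Injective fun r : Fin k => lam r x := fun r s h =>
    not_not.1 fun hrs => hdist r r.2 s s.2 (Fin.val_ne_of_ne hrs) h
  rw [Vvec_KblockDiag_vanishes_iff hn (fun r => hlam r r.2) h_inj]
  constructor
  · intro h s hs j0 hj0
    rw [show j0 = blockStart hn ⟨s, hs⟩ from Fin.ext (hj0.trans (blockStart_val hn ⟨s, hs⟩).symm)]
    exact h ⟨s, hs⟩
  · exact fun h r => h r r.2 (blockStart hn r) (blockStart_val hn r)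

theorem Vvec_vanishes_iff_weaklyNonlinear_blockDiag (k : ℕ) (m : ℕ → ℕ)
    (hm : ∀ s < k, 1 ≤ m s)
    {n : ℕ} (hn : n = Msum m k)
    (U : Set (Fin n → ℝ)) (hU : IsOpen U)
    (lam : ℕ → (Fin n → ℝ) → ℝ)
    (hlam : ∀ s < k, ContDiffOn ℝ (⊤ : ℕ∞) (lam s) U)
    (hdist : ∀ r < k, ∀ s < k, r ≠ s → ∀ x ∈ U, lam r x ≠ lam s x) :
    ∀ x ∈ U,
      ((∀ i : Fin n, Vvec (KblockDiag k m lam) i x = 0) ↔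
        (∀ s < k, ∀ j0 : Fin n, (j0 : ℕ) = Msum m s → pd (lam s) j0 x = 0)) := fun x hx =>
  Vvec_vanishes_iff_weaklyNonlinear_blockDiag_general k m hm hn lam x
    (fun s hs => ((hlam s hs).contDiffAt (hU.mem_nhds hx)).differentiableAt (by simp))
    fun r hr s hs hrs => hdist r hr s hs hrs x hx
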